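/- Let a be an element of an effect algebra E satisfying the Riesz decomposition property. The following are equivalent: (a) a is sharp; (b) a is central; (c) a is principal. -/

import Mathlib

/-- An effect algebra: a partial commutative, associative operation `oplus`
(with definedness encoded via `Option`), constants `zero` and `one`,
unique orthosupplements, and `a ⊕ 1` defined only for `a = 0`. -/
structure EffectAlgebra (E : Type*) where
  oplus : E → E → Option E
  zero : E
  one : E
  comm : ∀ a b, oplus a b = oplus b a
  assoc : ∀ a b c ab abc, oplus a b = some ab → oplus ab c = some abc →
    ∃ bc, oplus b c = some bc ∧ oplus a bc = some abc
  compl_exists : ∀ a, ∃ b, oplus a b = some one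
  compl_unique : ∀ a b c, oplus a b = some one → oplus a c = some one → b = c
  add_one : ∀ a b, oplus a one = some b → a = zero

namespace EffectAlgebra

variable {E : Type*} (A : EffectAlgebra E)

/-- `a ⊥ b` : the sum `a ⊕ b` is defined. -/
def Perp (a b : E) : Prop := (A.oplus a b).isSome

/-- `a ≤ b` iff `b = a ⊕ c` for some `c`. -/
def le (a b : E) : Prop := ∃ c, A.oplus a c = some b

/-- The orthosupplement `a'`: the unique `b` with `a ⊕ b = 1`. -/
noncomputable def compl (a : E) : E :=
  @Classical.epsilon E ⟨A.zero⟩ fun b => A.oplus a b = some A.one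

/-- `a ⊖ b` : the unique `c` with `b ⊕ c = a` (defined when `b ≤ a`). -/
noncomputable def ominus (a b : E) : E :=
  @Classical.epsilon E ⟨A.zero⟩ fun c => A.oplus b c = some a

/-- Homogeneity. -/
def Homogeneous : Prop :=
  ∀ u v₁ v₂ s, A.oplus v₁ v₂ = some s → A.le u s → A.le u (A.compl s) →
    ∃ u₁ u₂, A.le u₁ v₁ ∧ A.le u₂ v₂ ∧ A.oplus u₁ u₂ = some u

/-- Riesz decomposition property. -/
def RDP : Prop :=
  ∀ u v₁ v₂ s, A.oplus v₁ v₂ = some s → A.le u s →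
    ∃ u₁ u₂, A.le u₁ v₁ ∧ A.le u₂ v₂ ∧ A.oplus u₁ u₂ = some u

/-- The sum `c₁ ⊕ … ⊕ cₙ` of a finite family (a list); `some s` iff the family
is orthogonal with sum `s`. -/
def sumList : List E → Option E
  | [] => some A.zero
  | x :: xs => (sumList xs).bind fun s => A.oplus x s

/-- The subfamily of `C` indexed by a set of indices `S ⊆ {1,…,n}`. -/
def pickList (C : List E) (S : Finset (Fin C.length)) : List E :=
  (S.sort (· ≤ ·)).map C.get

/-- `C` is an orthogonal cover of `M`. -/
def IsCoverOf (C : List E) (M : Set E) : Prop :=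
  (A.sumList C).isSome ∧
    ∀ a ∈ M, ∃ S : Finset (Fin C.length), A.sumList (pickList C S) = some a

/-- `M` is compatible with covers in `X`: every finite subset of `M` has an
orthogonal cover with range contained in `X`. -/
def CompatWithCoversIn (M X : Set E) : Prop :=
  ∀ F : Finset E, ↑F ⊆ M →
    ∃ C : List E, (∀ c ∈ C, c ∈ X) ∧ A.IsCoverOf C ↑F

/-- `M` is compatible (with covers in `E`). -/
def Compatible (M : Set E) : Prop := A.CompatWithCoversIn M Set.univ

/-- `M` is internally compatible. -/
def InternallyCompatible (M : Set E) : Prop := A.CompatWithCoversIn M M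

/-- `D` is a refinement of `C`: a partition `{P i}` of the index set of `D`
with `C i = ⊕_{j ∈ P i} D j`. -/
def IsRefinement (D C : List E) : Prop :=
  ∃ P : Fin C.length → Finset (Fin D.length),
    (∀ i j, i ≠ j → Disjoint (P i) (P j)) ∧
    (∀ k, ∃ i, k ∈ P i) ∧
    (∀ i, A.sumList (pickList D (P i)) = some (C.get i))

/-- One step of the closure construction `M ↦ M₁`. -/
def closureStep (M : Set E) : Set E :=
  {x | ∃ y ∈ M, A.le x y ∧ A.le x (A.compl y)} ∪
  {z | ∃ y ∈ M, ∃ x, A.le x y ∧ A.le x (A.compl y) ∧ A.oplus x z = some y}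

/-- The sets `Mₙ`. -/
def closureSeq (M : Set E) (n : ℕ) : Set E := (A.closureStep)^[n] M

/-- The closure `M̄ = ⋃ₙ Mₙ`. -/
def closure (M : Set E) : Set E := ⋃ n, A.closureSeq M n

/-- `B` is a sub-effect algebra of `E`. -/
def IsSubEA (B : Set E) : Prop :=
  A.one ∈ B ∧ ∀ a ∈ B, ∀ b ∈ B, A.le b a → A.ominus a b ∈ B

/-- The Riesz decomposition property for (the effect algebra on) a subset `B`. -/
def RDPOn (B : Set E) : Prop :=
  ∀ u v₁ v₂ s, u ∈ B → v₁ ∈ B → v₂ ∈ B → A.oplus v₁ v₂ = some s → A.le u s →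
    ∃ u₁ u₂, u₁ ∈ B ∧ u₂ ∈ B ∧ A.le u₁ v₁ ∧ A.le u₂ v₂ ∧ A.oplus u₁ u₂ = some u

/-- Homogeneity for (the effect algebra on) a subset `B`. -/
def HomogeneousOn (B : Set E) : Prop :=
  ∀ u v₁ v₂ s, u ∈ B → v₁ ∈ B → v₂ ∈ B → A.oplus v₁ v₂ = some s →
    A.le u s → A.le u (A.compl s) →
    ∃ u₁ u₂, u₁ ∈ B ∧ u₂ ∈ B ∧ A.le u₁ v₁ ∧ A.le u₂ v₂ ∧ A.oplus u₁ u₂ = some u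

/-- A block: a maximal sub-effect algebra satisfying the Riesz decomposition
property. -/
def IsBlock (B : Set E) : Prop :=
  A.IsSubEA B ∧ A.RDPOn B ∧
    ∀ B', A.IsSubEA B' → A.RDPOn B' → B ⊆ B' → B' = B

/-- A block of the sub-effect algebra on `F`: a maximal sub-effect algebra of
`F` satisfying the Riesz decomposition property. -/
def IsBlockIn (F B : Set E) : Prop :=
  B ⊆ F ∧ A.IsSubEA B ∧ A.RDPOn B ∧
    ∀ B', B' ⊆ F → A.IsSubEA B' → A.RDPOn B' → B ⊆ B' → B' = B

/-- `a` is sharp: the infimum `a ∧ a'` exists and equals `0`, i.e. every common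
lower bound of `a` and `a'` is `0`. -/
def Sharp (a : E) : Prop :=
  ∀ b, A.le b a → A.le b (A.compl a) → b = A.zero

/-- `a` is sharp in the sub-effect algebra on `F`. -/
def SharpIn (F : Set E) (a : E) : Prop :=
  a ∈ F ∧ ∀ b ∈ F, A.le b a → A.le b (A.compl a) → b = A.zero

/-- `a` is principal. -/
def Principal (a : E) : Prop :=
  ∀ x y s, A.le x a → A.le y a → A.oplus x y = some s → A.le s a

/-- `a` is principal in the sub-effect algebra on `B`. -/
def PrincipalIn (B : Set E) (a : E) : Prop :=
  a ∈ B ∧ ∀ x ∈ B, ∀ y ∈ B, ∀ s, A.le x a → A.le y a →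
    A.oplus x y = some s → A.le s a

/-- `a` is central: principal, and every `b` has a unique decomposition
`b = b₁ ⊕ b₂` with `b₁ ≤ a`, `b₂ ≤ a'`. -/
def Central (a : E) : Prop :=
  A.Principal a ∧ ∀ b, ∃! p : E × E,
    A.le p.1 a ∧ A.le p.2 (A.compl a) ∧ A.oplus p.1 p.2 = some b

/-- `a` is central in the sub-effect algebra on `B`. -/
def CentralIn (B : Set E) (a : E) : Prop :=
  A.PrincipalIn B a ∧ ∀ b ∈ B, ∃! p : E × E,
    p.1 ∈ B ∧ p.2 ∈ B ∧ A.le p.1 a ∧ A.le p.2 (A.compl a) ∧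
      A.oplus p.1 p.2 = some b

/-- The center `C(E)`. -/
def center : Set E := {a | A.Central a}

/-- The compatibility center `K(E)`: the intersection of all blocks. -/
def compatCenter : Set E := {x | ∀ B, A.IsBlock B → x ∈ B}

end EffectAlgebra

namespace EffectAlgebra

variable {E : Type*} (A : EffectAlgebra E)

theorem h_compl (a : E) : A.oplus a (A.compl a) = some A.one :=
  @Classical.epsilon_spec E (fun b => A.oplus a b = some A.one) (A.compl_exists a)

theorem h_one_zero : A.oplus A.one A.zero = some A.one := by
  obtain ⟨b, hb⟩ := A.compl_exists A.one
  have : b = A.zero := A.add_one b A.one (by rw [A.comm]; exact hb)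
  rwa [this] at hb

theorem h_add_zero (a : E) : A.oplus a A.zero = some a := by
  obtain ⟨b, hb⟩ := A.compl_exists a
  rw [A.comm] at hb
  obtain ⟨c, hc, hc2⟩ := A.assoc _ _ _ _ _ hb A.h_one_zero
  rw [hc, A.compl_unique _ _ _ hc2 hb]

theorem h_cancel (a b c s : E) (h1 : A.oplus a b = some s) (h2 : A.oplus a c = some s) :
    b = c := by
  obtain ⟨d, hd⟩ := A.compl_exists s
  rw [A.comm] at h1 h2
  obtain ⟨t, ht, ht2⟩ := A.assoc _ _ _ _ _ h1 hd
  obtain ⟨t', ht', ht2'⟩ := A.assoc _ _ _ _ _ h2 hd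
  have e : t = t' := by rw [ht] at ht'; exact Option.some.inj ht'
  subst e
  rw [A.comm] at ht2 ht2'
  exact A.compl_unique _ _ _ ht2 ht2'

theorem h_pos (x y : E) (h : A.oplus x y = some A.zero) : x = A.zero := by
  rw [A.comm] at h
  have h0 : A.oplus A.zero A.one = some A.one := by rw [A.comm]; exact A.h_one_zero
  obtain ⟨t, ht, _⟩ := A.assoc _ _ _ _ _ h h0
  exact A.add_one _ _ ht

theorem h_le_trans (x y z : E) (h : A.le x y) (h' : A.le y z) : A.le x z := by
  obtain ⟨c, hc⟩ := h
  obtain ⟨d, hd⟩ := h'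
  obtain ⟨t, _, ht⟩ := A.assoc _ _ _ _ _ hc hd
  exact ⟨t, ht⟩

theorem h_le_refl (x : E) : A.le x x := ⟨_, A.h_add_zero x⟩

theorem h_le_antisymm (x y : E) (h : A.le x y) (h' : A.le y x) : x = y := by
  obtain ⟨c, hc⟩ := h
  obtain ⟨d, hd⟩ := h'
  obtain ⟨t, ht, ht2⟩ := A.assoc _ _ _ _ _ hc hd
  have e := A.h_cancel _ _ _ _ ht2 (A.h_add_zero x)
  subst e
  have e := A.h_pos _ _ ht
  subst e
  rw [A.h_add_zero] at hc
  exact Option.some.inj hc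

theorem h_le_right (x y s : E) (h : A.oplus x y = some s) : A.le y s :=
  ⟨x, by rw [A.comm]; exact h⟩

theorem h_le_one (x : E) : A.le x A.one := ⟨_, A.h_compl x⟩

theorem h_sharp_of_principal (a : E) (h : A.Principal a) : A.Sharp a := by
  intro b hb hb'
  obtain ⟨c, hc⟩ := hb'
  have h1 := A.h_compl a
  rw [A.comm] at h1 hc
  obtain ⟨t, ht, _⟩ := A.assoc _ _ _ _ _ hc h1
  rw [A.comm] at ht
  obtain ⟨d, hd⟩ := h a b t (A.h_le_refl a) hb ht
  obtain ⟨e, he, he2⟩ := A.assoc _ _ _ _ _ ht hd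
  have e := A.h_cancel _ _ _ _ he2 (A.h_add_zero a)
  subst e
  exact A.h_pos _ _ he

theorem h_principal_of_sharp (hR : A.RDP) (a : E) (h : A.Sharp a) : A.Principal a := by
  intro x y s hx hy hs
  obtain ⟨s1, s2, h1, h2, h3⟩ := hR s a _ _ (A.h_compl a) (A.h_le_one s)
  obtain ⟨u, v, hu, hv, huv⟩ := hR s2 x y s hs (A.h_le_right _ _ _ h3)
  have eu := h u (A.h_le_trans _ _ _ hu hx) (A.h_le_trans _ _ _ ⟨v, huv⟩ h2)
  have ev := h v (A.h_le_trans _ _ _ hv hy) (A.h_le_trans _ _ _ (A.h_le_right _ _ _ huv) h2)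
  subst eu ev
  rw [A.h_add_zero] at huv
  rw [← Option.some.inj huv, A.h_add_zero] at h3
  rwa [← Option.some.inj h3]

theorem h_le_of_sharp (hR : A.RDP) (a : E) (h : A.Sharp a) (p1 q1 q2 b : E)
    (hp : A.le p1 a) (hpb : A.le p1 b) (hq2 : A.le q2 (A.compl a))
    (hq : A.oplus q1 q2 = some b) : A.le p1 q1 := by
  obtain ⟨u, v, hu, hv, huv⟩ := hR p1 q1 q2 b hq hpb
  have ev := h v (A.h_le_trans _ _ _ (A.h_le_right _ _ _ huv) hp) (A.h_le_trans _ _ _ hv hq2)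
  subst ev
  rw [A.h_add_zero] at huv
  rwa [← Option.some.inj huv]

theorem h_central_of_sharp (hR : A.RDP) (a : E) (h : A.Sharp a) : A.Central a := by
  refine ⟨A.h_principal_of_sharp hR a h, fun b => ?_⟩
  obtain ⟨s1, s2, h1, h2, h3⟩ := hR b a _ _ (A.h_compl a) (A.h_le_one b)
  refine ⟨(s1, s2), ⟨h1, h2, h3⟩, ?_⟩
  rintro ⟨q1, q2⟩ ⟨g1, g2, g3⟩
  dsimp only at g1 g2 g3
  have e : q1 = s1 := A.h_le_antisymm _ _
    (A.h_le_of_sharp hR a h q1 s1 s2 b g1 ⟨_, g3⟩ h2 h3)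
    (A.h_le_of_sharp hR a h s1 q1 q2 b h1 ⟨_, h3⟩ g2 g3)
  subst e
  rw [A.h_cancel _ _ _ _ g3 h3]

end EffectAlgebra

/-- In an effect algebra with the Riesz decomposition property,
sharp, central and principal elements coincide. -/
theorem rdp_sharp_iff_central_iff_principal {E : Type*} (A : EffectAlgebra E)
    (hR : A.RDP) (a : E) :
    (A.Sharp a ↔ A.Central a) ∧ (A.Sharp a ↔ A.Principal a) :=
  ⟨⟨A.h_central_of_sharp hR a, fun h => A.h_sharp_of_principal a h.1⟩,
    ⟨A.h_principal_of_sharp hR a, A.h_sharp_of_principal a⟩⟩
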